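/- arXiv:1001.0746 — 2 statements merged into one kernel-verified Lean document; each statement's English description precedes it below -/
import Mathlib

section
/- For every real number c with 1 < c ≤ √2, there exists a normal form alternation-trading proof for c with exactly 4 lines, whose annotation is [1,0,0] (one application of Speedup Rule 0 followed by two applications of the Slowdown Rule). (This is the syntactic content of the Lipton–Viglas n^{√2} lower bound.) -/
/-- A quantifier block `(Q n^a)^b`: a quantifier label `Q` (`true` = ∃, `false` = ∀),
the guess exponent `a`, and the input exponent `b` written to its right
(so the block for `Q_i` carries `b_{i+1}`). -/
structure Block where
  Q : Bool
  a : ℝ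
  b : ℝ

/-- A line `(Q_1 n^{a_1})^{b_2} (Q_2 n^{a_2})^{b_3} ⋯ (Q_k n^{a_k})^{b_{k+1}} DTS[n^{a_{k+1}}]`.
The quantifier blocks are listed *innermost first*, i.e.
`blocks = [(Q_k, a_k, b_{k+1}), …, (Q_1, a_1, b_2)]`, and `dts = a_{k+1}`. -/
structure Line where
  blocks : List Block
  dts : ℝ

/-- Well-formedness of a line: `a_{k+1} ≥ 1`, all `a_i ≥ 0`, all `b_i ≥ 1`, and
adjacent quantifiers alternate (`Q_i ≠ Q_{i+1}`). -/
def Line.WF (L : Line) : Prop :=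
  1 ≤ L.dts ∧ (∀ B ∈ L.blocks, 0 ≤ B.a ∧ 1 ≤ B.b) ∧
    L.blocks.Chain' (fun B B' => B.Q ≠ B'.Q)

/-- Reading off `b_k` from the list of blocks outside block `k`:
by convention `b_1 = 1` when no blocks remain. -/
def prevB : List Block → ℝ
  | [] => 1
  | B :: _ => B.b

/-- Speedup Rule 0: from `DTS[n^{a₁}]` (k = 0), for any `0 < x < a₁` and `Q₀`,
derive `(Q₀ n^x)^{max(x,1)} (Q₁ n^0)^1 DTS[n^{max(a₁ - x, 1)}]` with `Q₁ ≠ Q₀`. -/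
inductive Speedup0 : Line → Line → Prop
  | intro (a₁ x : ℝ) (Q : Bool) (h0 : 0 < x) (h1 : x < a₁) :
      Speedup0 ⟨[], a₁⟩ ⟨[⟨!Q, 0, 1⟩, ⟨Q, x, max x 1⟩], max (a₁ - x) 1⟩

/-- Speedup Rule 1: from `⋯ (Q_k n^{a_k})^{b_{k+1}} DTS[n^{a_{k+1}}]` (k > 0), for any
`0 < x < a_{k+1}`, derive
`⋯ (Q_k n^{max(a_k,x)})^{max(x,b_{k+1})} (Q_{k+1} n^0)^{b_{k+1}} DTS[n^{max(a_{k+1} - x, 1)}]`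
with `Q_{k+1} ≠ Q_k`. -/
inductive Speedup1 : Line → Line → Prop
  | intro (Qk : Bool) (ak bk1 a x : ℝ) (rest : List Block) (h0 : 0 < x) (h1 : x < a) :
      Speedup1 ⟨⟨Qk, ak, bk1⟩ :: rest, a⟩
        ⟨⟨!Qk, 0, bk1⟩ :: ⟨Qk, max ak x, max x bk1⟩ :: rest, max (a - x) 1⟩

/-- Speedup Rule 2: from `⋯ (Q_k n^{a_k})^{b_{k+1}} DTS[n^{a_{k+1}}]` (k > 0), for any
`0 < x < a_{k+1}`, derive
`⋯ (Q_k n^{a_k})^{b_{k+1}} (Q_{k+1} n^x)^{max(x,b_{k+1})} (Q_{k+2} n^0)^{b_{k+1}}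
DTS[n^{max(a_{k+1} - x, 1)}]` with `Q_{k+1} ≠ Q_k`, `Q_{k+2} ≠ Q_{k+1}`. -/
inductive Speedup2 : Line → Line → Prop
  | intro (Qk : Bool) (ak bk1 a x : ℝ) (rest : List Block) (h0 : 0 < x) (h1 : x < a) :
      Speedup2 ⟨⟨Qk, ak, bk1⟩ :: rest, a⟩
        ⟨⟨Qk, 0, bk1⟩ :: ⟨!Qk, x, max x bk1⟩ :: ⟨Qk, ak, bk1⟩ :: rest, max (a - x) 1⟩

/-- A speedup step: an application of Speedup Rule 0, 1 or 2. -/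
def SpeedupStep (L L' : Line) : Prop := Speedup0 L L' ∨ Speedup1 L L' ∨ Speedup2 L L'

/-- Slowdown Rule: from `⋯ (Q_{k-1} n^{a_{k-1}})^{b_k} (Q_k n^{a_k})^{b_{k+1}} DTS[n^{a_{k+1}}]`
(k > 0) derive `⋯ (Q_{k-1} n^{a_{k-1}})^{b_k} DTS[n^{c · max(a_{k+1}, a_k, b_k, b_{k+1})}]`,
with the convention `b_1 = 1`. -/
inductive Slowdown (c : ℝ) : Line → Line → Prop
  | intro (Qk : Bool) (ak bk1 a : ℝ) (rest : List Block) :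
      Slowdown c ⟨⟨Qk, ak, bk1⟩ :: rest, a⟩
        ⟨rest, c * max (max a ak) (max (prevB rest) bk1)⟩

/-- A step of an alternation-trading proof for `c`. -/
def Step (c : ℝ) (L L' : Line) : Prop := SpeedupStep L L' ∨ Slowdown c L L'

/-- An alternation-trading proof for `c`: a nonempty list of well-formed lines in which
each line after the first follows from the previous one by a Speedup or Slowdown Rule. -/
def IsATProof (c : ℝ) (P : List Line) : Prop :=
  P ≠ [] ∧ (∀ L ∈ P, L.WF) ∧ P.Chain' (Step c)

/-- Normal form: the first line is `DTS[n^a]`, the last line is `DTS[n^{a'}]` with `a ≥ a'`,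
and no intermediate line is a `DTS` class (i.e. has `k = 0`). -/
def IsNormalForm (P : List Line) : Prop :=
  (∃ a a' : ℝ, a' ≤ a ∧ P.head? = some ⟨[], a⟩ ∧ P.getLast? = some ⟨[], a'⟩) ∧
    ∀ i L, 0 < i → i + 1 < P.length → P[i]? = some L → L.blocks ≠ []

/-- `A` is the annotation of the proof `P`: `A` has one bit per step of `P`
(bit `A[i]` governs the step from line `i` to line `i+1`, 0-indexed), a `true` bit
marks a Speedup Rule application and a `false` bit a Slowdown Rule application. -/
def HasAnnotation (c : ℝ) (P : List Line) (A : List Bool) : Prop :=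
  A.length + 1 = P.length ∧
    ∀ i L L', P[i]? = some L → P[i + 1]? = some L' →
      (A[i]? = some true → SpeedupStep L L') ∧ (A[i]? = some false → Slowdown c L L')

/-!
Guessing `n^x` bits speeds `DTS[n^{2x}]` up to `(∃ n^x)^x (∀ n^0)^1 DTS[n^x]`; starting at `2x`
balances the guess against the remaining computation. The first slowdown removes `∀` and yields
`(∃ n^x)^x DTS[n^{cx}]`, the second removes `∃` and yields `DTS[n^{c·max(cx, x)}]`. For `c ≥ 1` the
last exponent is `c²x`, which does not exceed `2x` exactly when `c² ≤ 2`; for `c < 1` it is `cx`.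
-/

theorem Line.wf_nil_iff {d : ℝ} : Line.WF ⟨[], d⟩ ↔ 1 ≤ d :=
  ⟨fun h => h.1, fun h => ⟨h, List.forall_mem_nil _, .nil⟩⟩

theorem Line.wf_cons_iff {B : Block} {R : List Block} {d : ℝ} :
    Line.WF ⟨B :: R, d⟩ ↔
      0 ≤ B.a ∧ 1 ≤ B.b ∧ (∀ B' ∈ R.head?, B.Q ≠ B'.Q) ∧ Line.WF ⟨R, d⟩ := by
  constructor
  · rintro ⟨hd, hblocks, hchain⟩
    obtain ⟨⟨ha, hb⟩, hR⟩ := List.forall_mem_cons.mp hblocks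
    obtain ⟨halt, hchainR⟩ := List.isChain_cons.mp hchain
    exact ⟨ha, hb, halt, hd, hR, hchainR⟩
  · rintro ⟨ha, hb, halt, hd, hR, hchainR⟩
    exact ⟨hd, List.forall_mem_cons.mpr ⟨⟨ha, hb⟩, hR⟩, List.isChain_cons.mpr ⟨halt, hchainR⟩⟩

namespace HasAnnotation

variable {c : ℝ} {L L' : Line} {P : List Line} {A : List Bool}

theorem singleton (c : ℝ) (L : Line) : HasAnnotation c [L] [] := by
  simp [HasAnnotation]

theorem cons {bit : Bool} (h : HasAnnotation c (L' :: P) A)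
    (hspeedup : bit = true → SpeedupStep L L') (hslowdown : bit = false → Slowdown c L L') :
    HasAnnotation c (L :: L' :: P) (bit :: A) := by
  refine ⟨congrArg Nat.succ h.1, ?_⟩
  rintro (_ | i) M M' hM hM'
  · obtain rfl : L = M := Option.some.inj hM
    obtain rfl : L' = M' := Option.some.inj hM'
    exact ⟨hspeedup ∘ Option.some.inj, hslowdown ∘ Option.some.inj⟩
  · exact h.2 i M M' hM hM'

theorem cons_speedup (h : HasAnnotation c (L' :: P) A) (hL : SpeedupStep L L') :
    HasAnnotation c (L :: L' :: P) (true :: A) :=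
  h.cons (fun _ => hL) nofun

theorem cons_slowdown (h : HasAnnotation c (L' :: P) A) (hL : Slowdown c L L') :
    HasAnnotation c (L :: L' :: P) (false :: A) :=
  h.cons nofun (fun _ => hL)

theorem isChain_step (h : HasAnnotation c P A) : P.IsChain (Step c) := by
  rw [List.isChain_iff_getElem]
  intro i hi
  have hiA : i < A.length := by have := h.1; omega
  have hstep := h.2 i P[i] P[i + 1] (List.getElem?_eq_getElem _) (List.getElem?_eq_getElem hi)
  cases hbit : A[i] with
  | true => exact Or.inl (hstep.1 (List.getElem?_eq_some_iff.mpr ⟨hiA, hbit⟩))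
  | false => exact Or.inr (hstep.2 (List.getElem?_eq_some_iff.mpr ⟨hiA, hbit⟩))

theorem isATProof (h : HasAnnotation c P A) (hwf : ∀ L ∈ P, L.WF) : IsATProof c P :=
  ⟨List.ne_nil_of_length_eq_add_one h.1.symm, hwf, h.isChain_step⟩

end HasAnnotation

theorem isNormalForm_cons_append_singleton {a a' : ℝ} {M : List Line} (ha : a' ≤ a)
    (hM : ∀ L ∈ M, L.blocks ≠ []) : IsNormalForm (⟨[], a⟩ :: (M ++ [⟨[], a'⟩])) := by
  refine ⟨⟨a, a', ha, rfl, by rw [← List.cons_append, List.getLast?_concat]⟩, ?_⟩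
  rintro (_ | i) L hpos hlt hL
  · exact absurd hpos (lt_irrefl 0)
  · have hiM : i < M.length := by simpa using hlt
    rw [List.getElem?_cons_succ, List.getElem?_append_left hiM] at hL
    exact hM L (List.mem_of_getElem? hL)

theorem speedupStep_two_mul {x : ℝ} (hx : 1 ≤ x) (Q : Bool) :
    SpeedupStep ⟨[], 2 * x⟩ ⟨[⟨!Q, 0, 1⟩, ⟨Q, x, x⟩], x⟩ := by
  have h := Speedup0.intro (2 * x) x Q (by linarith) (by linarith)
  rw [two_mul, add_sub_cancel_right, max_eq_left hx, ← two_mul] at h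
  exact Or.inl h

theorem slowdown_guess_zero (c : ℝ) {x : ℝ} (hx : 1 ≤ x) (Q Q' : Bool) (a : ℝ) (R : List Block) :
    Slowdown c ⟨⟨Q, 0, 1⟩ :: ⟨Q', a, x⟩ :: R, x⟩ ⟨⟨Q', a, x⟩ :: R, c * x⟩ := by
  have h := Slowdown.intro (c := c) Q 0 1 x (⟨Q', a, x⟩ :: R)
  rwa [prevB, max_eq_left (zero_le_one.trans hx), max_eq_left hx, max_self] at h

theorem slowdown_singleton (c : ℝ) {x : ℝ} (hx : 1 ≤ x) (Q : Bool) (d : ℝ) :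
    Slowdown c ⟨[⟨Q, x, x⟩], d⟩ ⟨[], c * max d x⟩ := by
  have h := Slowdown.intro (c := c) Q x x d []
  rwa [prevB, max_eq_right hx, max_assoc, max_self] at h

/-- The Lipton–Viglas alternation-trading proof started at `DTS[n^{2x}]`. Since `true` encodes `∃`
and blocks are listed innermost first, its second line is `(∃ n^x)^x (∀ n^0)^1 DTS[n^x]`. -/
def liptonViglas (c x : ℝ) : List Line :=
  [⟨[], 2 * x⟩, ⟨[⟨false, 0, 1⟩, ⟨true, x, x⟩], x⟩, ⟨[⟨true, x, x⟩], c * x⟩,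
    ⟨[], c * max (c * x) x⟩]

theorem hasAnnotation_liptonViglas (c : ℝ) {x : ℝ} (hx : 1 ≤ x) :
    HasAnnotation c (liptonViglas c x) [true, false, false] :=
  HasAnnotation.singleton c _
    |>.cons_slowdown (slowdown_singleton c hx true (c * x))
    |>.cons_slowdown (slowdown_guess_zero c hx false true x [])
    |>.cons_speedup (speedupStep_two_mul hx true)

theorem wf_of_mem_liptonViglas {c x : ℝ} (hc : 0 ≤ c) (hx : 1 ≤ x) (hcx : 1 ≤ c * x) :
    ∀ L ∈ liptonViglas c x, L.WF := by
  have hx0 : 0 ≤ x := zero_le_one.trans hx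
  have hfirst : 1 ≤ 2 * x := by linarith
  have hlast : 1 ≤ c * max (c * x) x :=
    hcx.trans (mul_le_mul_of_nonneg_left (le_max_right _ _) hc)
  simp [liptonViglas, Line.wf_nil_iff, Line.wf_cons_iff, hx, hx0, hfirst, hcx, hlast]

theorem isNormalForm_liptonViglas {c x : ℝ} (hc : 0 ≤ c) (hc2 : c ^ 2 ≤ 2) (hx : 0 ≤ x) :
    IsNormalForm (liptonViglas c x) := by
  have hle : c * max (c * x) x ≤ 2 * x := by
    rw [mul_max_of_nonneg _ _ hc, ← mul_assoc, ← sq]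
    have hc' : c ≤ 2 := by nlinarith
    exact max_le (mul_le_mul_of_nonneg_right hc2 hx) (mul_le_mul_of_nonneg_right hc' hx)
  exact isNormalForm_cons_append_singleton (M := [_, _]) hle (by simp)

theorem statement0_general (c : ℝ) (hc0 : 0 < c) (hc2 : c ≤ Real.sqrt 2) :
    ∃ P : List Line, IsATProof c P ∧ IsNormalForm P ∧ P.length = 4 ∧
      HasAnnotation c P [true, false, false] := by
  -- For `c < 1` the exponent `x = 1` would make the third line `DTS[n^c]` ill-formed.
  obtain ⟨x, hx, hcx⟩ : ∃ x, 1 ≤ x ∧ 1 ≤ c * x :=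
    ⟨max 1 c⁻¹, le_max_left _ _, (inv_le_iff_one_le_mul₀' hc0).mp (le_max_right _ _)⟩
  have hsq : c ^ 2 ≤ 2 := (Real.le_sqrt hc0.le two_pos.le).mp hc2
  have hannot := hasAnnotation_liptonViglas c hx
  exact ⟨liptonViglas c x, hannot.isATProof (wf_of_mem_liptonViglas hc0.le hx hcx),
    isNormalForm_liptonViglas hc0.le hsq (zero_le_one.trans hx), rfl, hannot⟩

/-- for every real `1 < c ≤ √2` there is a normal form alternation-trading
proof for `c` with exactly 4 lines and annotation `[1,0,0]`. -/
theorem statement0 (c : ℝ) (hc1 : 1 < c) (hc2 : c ≤ Real.sqrt 2) :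
    ∃ P : List Line, IsATProof c P ∧ IsNormalForm P ∧ P.length = 4 ∧
      HasAnnotation c P [true, false, false] :=
  statement0_general c (one_pos.trans hc1) hc2
end

section
/- For every real number c with 1 < c < 2·cos(π/7), there exists a normal form alternation-trading proof for c with at least two lines. (This is the syntactic content of the n^{2cos(π/7)} time lower bound for SAT on n^{o(1)}-space algorithms.) -/
/-!
Suppose that, next to a machine of large exponent `a`, an innermost block `(Q n^0)^1` can be
removed at the price of multiplying `a` by `r`; a single slowdown gives `r = c`. To do better,
first speed up by `x`, remove the newly created block at ratio `r`, and then lower the exponent of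
`(Q n^x)^x DTS[n^a]` by repeatedly speeding up by `x` and slowing down. The latter sends `a` to
`c (a - x)`, whose repelling fixed point is `c x / (c - 1)`, so any exponent `K x` with
`K < c / (c - 1)` falls to `c x`. Choosing `x` so that `r (a - x) = K x`, one more slowdown yields
the ratio `c² r / (r + K)`. Iterating brings the ratio below `1` as soon as `c² < 1 + K`, and some
`K` satisfies both constraints exactly when `c³ - c² - 2c + 1 < 0`, a cubic whose largest root is
`2 cos (π / 7)`.
-/

open Filter Relation

namespace AlternationTrading

theorem exists_le_of_forall_exists_le_mul {𝕜 : Type*} [Field 𝕜] [LinearOrder 𝕜]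
    [IsStrictOrderedRing 𝕜] [Archimedean 𝕜] {P : 𝕜 → Prop} {q δ r₀ : 𝕜} (hδ : 0 < δ) (hq : q < 1)
    (hP : ∀ r, δ < r → P r → ∃ s ≤ q * r, P s) (h₀ : P r₀) : ∃ r ≤ δ, P r := by
  by_contra! hall
  have hlarge : ∀ r, P r → δ < r := fun r hr => not_le.1 fun hle => hall r hle hr
  have hr₀ : 0 < r₀ := hδ.trans (hlarge r₀ h₀)
  have hq₀ : 0 < q := by
    obtain ⟨s, hs, hPs⟩ := hP r₀ (hlarge r₀ h₀) h₀
    exact pos_of_mul_pos_left ((hδ.trans (hlarge s hPs)).trans_le hs) hr₀.le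
  have hdecay : ∀ n : ℕ, ∃ r ≤ q ^ n * r₀, P r := by
    intro n
    induction n with
    | zero => exact ⟨r₀, by simp, h₀⟩
    | succ n ih =>
      obtain ⟨r, hr, hPr⟩ := ih
      obtain ⟨s, hs, hPs⟩ := hP r (hlarge r hPr) hPr
      refine ⟨s, hs.trans ?_, hPs⟩
      rw [pow_succ', mul_assoc]
      gcongr
  obtain ⟨n, hn⟩ := exists_pow_lt_of_lt_one (div_pos hδ hr₀) hq
  obtain ⟨r, hr, hPr⟩ := hdecay n
  exact (hlarge r hPr).not_ge (hr.trans ((lt_div_iff₀ hr₀).1 hn).le)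

section WellFormed

variable {c a d : ℝ} {B : Block} {rest : List Block} {L L' : Line} {l : List Line}

theorem wf_nil_iff : Line.WF ⟨[], d⟩ ↔ 1 ≤ d :=
  ⟨And.left, fun hd => ⟨hd, by simp, List.isChain_nil⟩⟩

theorem wf_cons_iff : Line.WF ⟨B :: rest, d⟩ ↔
    0 ≤ B.a ∧ 1 ≤ B.b ∧ (∀ B' ∈ rest.head?, B.Q ≠ B'.Q) ∧ Line.WF ⟨rest, d⟩ := by
  change _ ∧ _ ∧ List.IsChain _ _ ↔ _ ∧ _ ∧ _ ∧ _ ∧ _ ∧ List.IsChain _ _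
  rw [List.forall_mem_cons, List.isChain_cons]
  tauto

theorem wf_of_one_le_dts (h : Line.WF ⟨rest, a⟩) (hd : 1 ≤ d) : Line.WF ⟨rest, d⟩ :=
  ⟨hd, h.2⟩

theorem wf_of_speedup0 (h : Speedup0 L L') : L'.WF := by
  obtain ⟨a, x, Q, hx, -⟩ := h
  simp [wf_cons_iff, wf_nil_iff, hx.le]

theorem wf_of_speedup1 (h : Speedup1 L L') (hL : L.WF) : L'.WF := by
  obtain ⟨Q, y, b, a, x, rest, hx, -⟩ := h
  obtain ⟨hy, hb, hQ, hrest⟩ := wf_cons_iff.1 hL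
  refine wf_cons_iff.2 ⟨le_rfl, hb, by simp, wf_cons_iff.2 ⟨?_, ?_, hQ, ?_⟩⟩
  · exact le_max_of_le_left hy
  · exact le_max_of_le_right hb
  · exact wf_of_one_le_dts hrest (le_max_right _ _)

theorem wf_of_speedup2 (h : Speedup2 L L') (hL : L.WF) : L'.WF := by
  obtain ⟨Q, y, b, a, x, rest, hx, -⟩ := h
  have hb : 1 ≤ b := (wf_cons_iff.1 hL).2.1
  refine wf_cons_iff.2 ⟨le_rfl, hb, by simp, wf_cons_iff.2 ⟨hx.le, ?_, by simp, ?_⟩⟩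
  · exact le_max_of_le_right hb
  · exact wf_of_one_le_dts hL (le_max_right _ _)

theorem wf_of_slowdown (hc : 1 ≤ c) (h : Slowdown c L L') (hL : L.WF) : L'.WF := by
  obtain ⟨Q, y, b, a, rest⟩ := h
  refine wf_of_one_le_dts (wf_cons_iff.1 hL).2.2.2 (one_le_mul_of_one_le_of_one_le hc ?_)
  exact le_max_of_le_left (le_max_of_le_left hL.1)

theorem wf_of_step (hc : 1 ≤ c) (h : Step c L L') (hL : L.WF) : L'.WF := by
  rcases h with (h | h | h) | h
  · exact wf_of_speedup0 h
  · exact wf_of_speedup1 h hL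
  · exact wf_of_speedup2 h hL
  · exact wf_of_slowdown hc h hL

theorem isATProof_of_isChain (hc : 1 ≤ c) (hL : L.WF) (h : (L :: l).IsChain (Step c)) :
    IsATProof c (L :: l) :=
  ⟨List.cons_ne_nil _ _, h.induction Line.WF _ (fun _ _ => wf_of_step hc) fun _ => hL, h⟩

end WellFormed

/-- A proof step whose result still has a quantifier block. -/
def InnerStep (c : ℝ) (L L' : Line) : Prop := Step c L L' ∧ L'.blocks ≠ []

/-- `L'` can be reached from `L` by inner steps; these are the derivations that can occur in a
normal form proof before its last step. -/
abbrev Derives (c : ℝ) : Line → Line → Prop := ReflTransGen (InnerStep c)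

section NormalForm

variable {c a a' : ℝ} {L : Line} {l : List Line}

theorem isNormalForm_of_blocks_ne_nil (haa : a' ≤ a) (hl : ∀ M ∈ l, M.blocks ≠ []) :
    IsNormalForm (⟨[], a⟩ :: (l ++ [⟨[], a'⟩])) := by
  refine ⟨⟨a, a', haa, rfl, by simp [List.getLast?_cons]⟩, fun i M hi hlen hM => ?_⟩
  obtain ⟨j, rfl⟩ := Nat.exists_eq_succ_of_ne_zero hi.ne'
  have hj : j < l.length := by simpa using hlen
  rw [List.getElem?_cons_succ, List.getElem?_append_left hj] at hM
  exact hl M (List.mem_of_getElem? hM)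

theorem blocks_ne_nil_of_isChain_innerStep (h : (L :: l).IsChain (InnerStep c)) :
    ∀ M ∈ l, M.blocks ≠ [] := by
  induction l generalizing L with
  | nil => simp
  | cons M l ih =>
    obtain ⟨hM, hl⟩ := List.isChain_cons_cons.1 h
    exact List.forall_mem_cons.2 ⟨hM.2, ih hl⟩

theorem exists_normalForm_of_derives (hc : 1 ≤ c) (ha : 1 ≤ a) (haa : a' ≤ a)
    (h : Derives c ⟨[], a⟩ L) (hlast : Step c L ⟨[], a'⟩) :
    ∃ P : List Line, IsATProof c P ∧ IsNormalForm P ∧ 2 ≤ P.length := by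
  obtain ⟨l, hl, hlL⟩ := List.exists_isChain_cons_of_relationReflTransGen h
  have hchain : List.IsChain (Step c) ((⟨[], a⟩ :: l) ++ [⟨[], a'⟩]) := by
    refine List.isChain_append.2 ⟨hl.imp fun _ _ hs => hs.1, List.isChain_singleton _, ?_⟩
    simpa [List.getLast?_eq_getLast_of_ne_nil (List.cons_ne_nil _ l), hlL] using hlast
  exact ⟨_, isATProof_of_isChain hc (wf_nil_iff.2 ha) hchain,
    isNormalForm_of_blocks_ne_nil haa (blocks_ne_nil_of_isChain_innerStep hl), by simp⟩

end NormalForm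

section Rules

variable {c a b x y : ℝ} {Q : Bool} {rest : List Block}

theorem speedup0_of_one_le (hx : 1 ≤ x) (ha : 1 ≤ a) :
    Speedup0 ⟨[], a + x⟩ ⟨[⟨!Q, 0, 1⟩, ⟨Q, x, x⟩], a⟩ := by
  simpa [hx, ha] using Speedup0.intro (a + x) x Q (by linarith) (by linarith)

theorem speedup1_of_le (hx : 0 < x) (hy : y ≤ x) (hb : b ≤ x) (ha : x < a) :
    Speedup1 ⟨⟨Q, y, b⟩ :: rest, a⟩ ⟨⟨!Q, 0, b⟩ :: ⟨Q, x, x⟩ :: rest, max (a - x) 1⟩ := by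
  simpa [hy, hb] using Speedup1.intro Q y b a x rest hx ha

theorem slowdown_of_le (hy : y ≤ a) (hb : b ≤ max a (prevB rest)) :
    Slowdown c ⟨⟨Q, y, b⟩ :: rest, a⟩ ⟨rest, c * max a (prevB rest)⟩ := by
  simpa [hy, hb, ← max_assoc] using Slowdown.intro (c := c) Q y b a rest

end Rules

section Lowering

variable {c K a x r : ℝ}

theorem derives_mul_max_sub (Q : Bool) (rest : List Block) (hx : 1 ≤ x) (ha : x < a) :
    Derives c ⟨⟨Q, x, x⟩ :: rest, a⟩ ⟨⟨Q, x, x⟩ :: rest, c * max (a - x) x⟩ := by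
  have hup := speedup1_of_le (Q := Q) (rest := rest) (zero_lt_one.trans_le hx) le_rfl le_rfl ha
  have hdown := slowdown_of_le (c := c) (Q := !Q) (y := 0) (b := x) (a := max (a - x) 1)
    (rest := ⟨Q, x, x⟩ :: rest) (by positivity) (le_max_right _ _)
  rw [prevB, max_assoc, max_eq_right hx] at hdown
  exact .tail (.single ⟨.inl (.inr (.inl hup)), by simp⟩) ⟨.inr hdown, by simp⟩

theorem derives_mul_of_max_mul (hc : 1 < c) (hK₀ : 0 < K) (hK : K * (c - 1) < c) (Q : Bool)
    (rest : List Block) (hx : 1 ≤ x) :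
    Derives c ⟨⟨Q, x, x⟩ :: rest, max (K * x) (c * x)⟩ ⟨⟨Q, x, x⟩ :: rest, c * x⟩ := by
  let Reachable (a : ℝ) : Prop := a ≤ K * x ∧
    Derives c ⟨⟨Q, x, x⟩ :: rest, max (K * x) (c * x)⟩ ⟨⟨Q, x, x⟩ :: rest, max a (c * x)⟩
  have hcx : x < c * x := by nlinarith
  have hq : c * (1 - 1 / K) < 1 := by
    have : c * (1 - 1 / K) = (K * (c - 1) - c) / K + 1 := by field_simp; ring
    have : (K * (c - 1) - c) / K < 0 := div_neg_of_neg_of_pos (by linarith) hK₀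
    linarith
  have hround : ∀ a, c * x < a → Reachable a → ∃ s ≤ c * (1 - 1 / K) * a, Reachable s := by
    rintro a ha ⟨haK, hreach⟩
    have hle : c * (a - x) ≤ c * (1 - 1 / K) * a := by
      have : a / K ≤ x := (div_le_iff₀' hK₀).2 haK
      calc c * (a - x) ≤ c * (a - a / K) := by gcongr
        _ = c * (1 - 1 / K) * a := by ring
    refine ⟨c * (a - x), hle, hle.trans ?_, ?_⟩
    · nlinarith
    · rw [max_eq_left ha.le] at hreach
      rw [← mul_max_of_nonneg _ _ (by linarith)]
      exact hreach.trans (derives_mul_max_sub Q rest hx (hcx.trans ha))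
  obtain ⟨a, ha, -, hreach⟩ :=
    exists_le_of_forall_exists_le_mul (by linarith) hq hround ⟨le_rfl, .refl⟩
  rwa [max_eq_right ha] at hreach

end Lowering

/-- `r` is a removal ratio for `c` if, next to `DTS[n^a]` with `a` large, an innermost block
`(Q n^0)^1` can be removed at the price of multiplying the exponent `a` by `r`. The new exponent
cannot be pushed below `c * B.b`, where `B` is the block that becomes innermost. -/
def IsRemovalRatio (c r : ℝ) : Prop :=
  0 < r ∧ ∀ᶠ a in atTop, ∀ (Q : Bool) (B : Block) (rest : List Block),
    Derives c ⟨⟨Q, 0, 1⟩ :: B :: rest, a⟩ ⟨B :: rest, max (r * a) (c * B.b)⟩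

section RemovalRatio

variable {c K r : ℝ}

theorem isRemovalRatio_self (hc : 0 < c) : IsRemovalRatio c c := by
  refine ⟨hc, ?_⟩
  filter_upwards [eventually_ge_atTop 1] with a ha Q B rest
  rw [← mul_max_of_nonneg _ _ hc.le]
  have hdown := slowdown_of_le (c := c) (Q := Q) (rest := B :: rest) (zero_le_one.trans ha)
    (le_max_of_le_left ha)
  exact .single ⟨.inr hdown, by simp⟩

theorem IsRemovalRatio.eventually_derives_mul (hr : IsRemovalRatio c r) (hc : 1 < c) (hK₀ : 0 < K)
    (hK : K * (c - 1) < c) :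
    ∀ᶠ x in atTop, ∀ (Q : Bool) (rest : List Block),
      Derives c ⟨⟨!Q, 0, 1⟩ :: ⟨Q, x, x⟩ :: rest, K / r * x⟩ ⟨⟨Q, x, x⟩ :: rest, c * x⟩ := by
  obtain ⟨hr₀, hremove⟩ := hr
  have hlarge : Tendsto (fun x : ℝ => K / r * x) atTop atTop :=
    tendsto_id.const_mul_atTop (div_pos hK₀ hr₀)
  filter_upwards [hlarge.eventually hremove, eventually_ge_atTop 1] with x hx hx₁ Q rest
  have hremoved := hx (!Q) ⟨Q, x, x⟩ rest
  rw [← mul_assoc, mul_div_cancel₀ _ hr₀.ne'] at hremoved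
  exact hremoved.trans (derives_mul_of_max_mul hc hK₀ hK Q rest hx₁)

theorem slowdown_mul (hc : 1 ≤ c) {x : ℝ} (hx : 0 ≤ x) (Q : Bool) (rest : List Block) :
    Slowdown c ⟨⟨Q, x, x⟩ :: rest, c * x⟩ ⟨rest, max (c * (c * x)) (c * prevB rest)⟩ := by
  have hcx : x ≤ c * x := le_mul_of_one_le_left hx hc
  rw [← mul_max_of_nonneg _ _ (by linarith)]
  exact slowdown_of_le hcx (le_max_of_le_left hcx)

theorem IsRemovalRatio.next (hr : IsRemovalRatio c r) (hc : 1 < c) (hK₀ : 0 < K)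
    (hK : K * (c - 1) < c) : IsRemovalRatio c (c ^ 2 * r / (r + K)) := by
  have hr₀ := hr.1
  refine ⟨by positivity, ?_⟩
  have hlargeL : Tendsto (fun a : ℝ => r / (r + K) * a) atTop atTop :=
    tendsto_id.const_mul_atTop (by positivity)
  have hlargeR : Tendsto (fun a : ℝ => K / (r + K) * a) atTop atTop :=
    tendsto_id.const_mul_atTop (by positivity)
  filter_upwards [hlargeL.eventually (hr.eventually_derives_mul hc hK₀ hK),
    hlargeL.eventually_ge_atTop 1, hlargeR.eventually_ge_atTop 1] with a hderives hx hy Q B rest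
  set x := r / (r + K) * a with hxa
  have hsub : a - x = K / r * x := by rw [hxa]; field_simp; ring
  have hsub' : K / (r + K) * a = K / r * x := by rw [hxa]; field_simp
  have hratio : c ^ 2 * r / (r + K) * a = c * (c * x) := by rw [hxa]; ring
  have hup := speedup1_of_le (Q := Q) (rest := B :: rest) (y := 0) (b := 1) (a := a) (x := x)
    (by linarith) (by linarith) hx (by linarith)
  rw [hsub, max_eq_left (by linarith)] at hup
  have hdown := slowdown_mul hc.le (zero_le_one.trans hx) Q (B :: rest)
  rw [hratio]
  exact ReflTransGen.head ⟨.inl (.inr (.inl hup)), by simp⟩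
    ((hderives Q (B :: rest)).tail ⟨.inr hdown, by simp⟩)

theorem exists_isRemovalRatio_le_one (hc : 1 < c) (hK : K * (c - 1) < c) (hcK : c ^ 2 < 1 + K) :
    ∃ r ≤ 1, IsRemovalRatio c r := by
  have hK₀ : 0 < K := by nlinarith
  refine exists_le_of_forall_exists_le_mul zero_lt_one ((div_lt_one (by linarith)).2 hcK)
    (fun r hr hratio => ⟨_, ?_, hratio.next hc hK₀ hK⟩) (isRemovalRatio_self (by linarith))
  calc c ^ 2 * r / (r + K) ≤ c ^ 2 * r / (1 + K) := by gcongr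
    _ = c ^ 2 / (1 + K) * r := by ring

theorem IsRemovalRatio.exists_normalForm (hr : IsRemovalRatio c r) (hc : 1 < c) (hK₀ : 0 < K)
    (hK : K * (c - 1) < c) (hrK : c ^ 2 * r ≤ r + K) :
    ∃ P : List Line, IsATProof c P ∧ IsNormalForm P ∧ 2 ≤ P.length := by
  have hr₀ := hr.1
  have hlarge : Tendsto (fun x : ℝ => K / r * x) atTop atTop :=
    tendsto_id.const_mul_atTop (div_pos hK₀ hr₀)
  obtain ⟨x, hderives, hy, hx⟩ := ((hr.eventually_derives_mul hc hK₀ hK).and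
    ((hlarge.eventually_ge_atTop c).and (eventually_ge_atTop 1))).exists
  have hup := speedup0_of_one_le (Q := true) hx (hc.le.trans hy)
  have hdown := slowdown_mul hc.le (zero_le_one.trans hx) true []
  have hle : max (c * (c * x)) (c * prevB []) ≤ K / r * x + x := by
    refine max_le ?_ (by rw [prevB]; linarith)
    calc c * (c * x) = c ^ 2 * r / r * x := by field_simp
      _ ≤ (r + K) / r * x := by gcongr
      _ = K / r * x + x := by field_simp; ring
  exact exists_normalForm_of_derives hc.le (by linarith) hle
    (.head ⟨.inl (.inl hup), by simp⟩ (hderives true [])) (.inr hdown)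

theorem exists_normalForm_of_cubic_neg (hc : 1 < c) (hcubic : c ^ 3 - c ^ 2 - 2 * c + 1 < 0) :
    ∃ P : List Line, IsATProof c P ∧ IsNormalForm P ∧ 2 ≤ P.length := by
  have hinterval : c ^ 2 - 1 < c / (c - 1) := by
    rw [lt_div_iff₀ (by linarith)]
    linarith
  obtain ⟨K, hcK, hK⟩ := exists_between hinterval
  rw [lt_div_iff₀ (by linarith)] at hK
  obtain ⟨r, hr₁, hr⟩ := exists_isRemovalRatio_le_one hc hK (by linarith)
  have hK₀ : 0 < K := by nlinarith
  have hrK : c ^ 2 * r ≤ r + K := by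
    have hc₂ : 1 ≤ c ^ 2 := one_le_pow₀ hc.le
    nlinarith
  exact hr.exists_normalForm hc hK₀ hK hrK

end RemovalRatio

theorem two_cos_pi_div_seven_root :
    (2 * Real.cos (Real.pi / 7)) ^ 3 - (2 * Real.cos (Real.pi / 7)) ^ 2
      - 2 * (2 * Real.cos (Real.pi / 7)) + 1 = 0 := by
  set t := Real.pi / 7 with ht
  have hcos : 0 < Real.cos t :=
    Real.cos_pos_of_mem_Ioo ⟨by linarith [Real.pi_pos], by linarith [Real.pi_pos]⟩
  -- The cubic appears after cancelling the root `-1` of this quartic equation in `cos t`.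
  have cos_four_mul : Real.cos (2 * (2 * t)) = -Real.cos (3 * t) := by
    rw [← Real.cos_pi_sub, ht]
    ring_nf
  rw [Real.cos_two_mul, Real.cos_two_mul, Real.cos_three_mul] at cos_four_mul
  have hne : 2 * Real.cos t + 2 ≠ 0 := by linarith
  refine (mul_eq_zero.1 (?_ : (2 * Real.cos t + 2) * _ = 0)).resolve_left hne
  linear_combination 2 * cos_four_mul

theorem cubic_neg_of_lt_root {c z : ℝ} (hz : z ^ 3 - z ^ 2 - 2 * z + 1 = 0) (hc : 1 < c)
    (hcz : c < z) : c ^ 3 - c ^ 2 - 2 * c + 1 < 0 := by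
  have hz₂ : 0 < z ^ 2 - 2 := by
    have hmul : 0 < (z - 1) * (z ^ 2 - 2) := by linarith
    exact pos_of_mul_pos_right hmul (by linarith)
  calc c ^ 3 - c ^ 2 - 2 * c + 1
      = (c - z) * ((c - 1) * (c + z) + (z ^ 2 - 2)) := by linear_combination hz
    _ < 0 := mul_neg_of_neg_of_pos (by linarith) (by nlinarith)

end AlternationTrading

open AlternationTrading in
/-- for every real `1 < c < 2cos(π/7)` there is a normal form
alternation-trading proof for `c` with at least two lines. -/
theorem statement2 (c : ℝ) (hc1 : 1 < c) (hc2 : c < 2 * Real.cos (Real.pi / 7)) :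
    ∃ P : List Line, IsATProof c P ∧ IsNormalForm P ∧ 2 ≤ P.length := by
  exact exists_normalForm_of_cubic_neg hc1
    (cubic_neg_of_lt_root two_cos_pi_div_seven_root hc1 hc2)
end
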